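/- arXiv:2310.00414 — 5 statements merged into one kernel-verified Lean document; each statement's English description precedes it below -/
import Mathlib

section
/- Let Γ be a reduced labeled graph with all labels positive, and let γ = (e₁,…,eₛ,e) be a strict monotone cycle in Γ for some s ≥ 0. Suppose Γ′ is a reduced labeled graph obtained from Γ by a single slide move of one of the edges e, ē, eᵢ or ēᵢ (for some 1 ≤ i ≤ s) over an oriented edge f with f ∉ {e, ē}. Then Γ′ contains a strict monotone cycle. -/
/-! Labeled graphs in the sense of generalized Baumslag–Solitar theory. -/

structure LGraph (V E : Type) where
  o : E → V
  bar : E → E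
  bar_bar : ∀ e, bar (bar e) = e
  bar_ne : ∀ e, bar e ≠ e
  lab : E → ℤ

namespace LGraph

variable {V E V' E' : Type}

/-- Terminal vertex of an oriented edge. -/
def t (G : LGraph V E) (e : E) : V := G.o (G.bar e)

/-- All labels are positive. -/
def Positive (G : LGraph V E) : Prop := ∀ e : E, 0 < G.lab e

/-- No collapsible edge: every label-1 edge is a loop. -/
def Reduced (G : LGraph V E) : Prop := ∀ e : E, G.lab e = 1 → G.o e = G.t e

/-- An `n`-rose: one vertex and `n` pairs of oriented edges. -/
def IsRose (G : LGraph V E) (n : ℕ) : Prop :=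
  Nat.card V = 1 ∧ Nat.card E = 2 * n

/-- Modulus of a single oriented edge: `λ(ē)/λ(e)`. -/
def qe (G : LGraph V E) (e : E) : ℚ := (G.lab (G.bar e) : ℚ) / (G.lab e : ℚ)

/-- Modulus of an edge path. -/
def q (G : LGraph V E) (l : List E) : ℚ := (l.map G.qe).prod

/-- Consecutive edges match up. -/
def IsEdgePath (G : LGraph V E) (l : List E) : Prop :=
  List.Chain' (fun a b => G.t a = G.o b) l

/-- An `e`-edge path. -/
def IsEEdgePath (G : LGraph V E) (e : E) (l : List E) : Prop :=
  G.IsEdgePath l ∧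
  (∀ a ∈ l, a ≠ e ∧ a ≠ G.bar e) ∧
  (∀ a ∈ l.head?, G.o a = G.o e) ∧
  ∀ i : Fin l.length, ∃ k : ℤ,
    (G.lab e : ℚ) * G.q (l.take i.1) = (k : ℚ) * (G.lab (l.get i) : ℚ)

/-- A monotone cycle `(e₁,…,eₛ,e)`. -/
def IsMonotoneCycle (G : LGraph V E) (l : List E) (e : E) : Prop :=
  G.IsEEdgePath (G.bar e) l ∧
  G.t (l.getLastD e) = G.o e ∧
  ∃ k : ℤ, G.q (l ++ [e]) = (k : ℚ)

/-- A strict monotone cycle. -/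
def IsStrictMonotoneCycle (G : LGraph V E) (l : List E) (e : E) : Prop :=
  G.IsMonotoneCycle l e ∧ G.q (l ++ [e]) ≠ 1

def HasStrictMonotoneCycle (G : LGraph V E) : Prop :=
  ∃ (l : List E) (e : E), G.IsStrictMonotoneCycle l e

/-- A strict `e`-integer cycle. -/
def IsStrictIntegerCycle (G : LGraph V E) (e : E) (l : List E) : Prop :=
  G.IsEEdgePath e l ∧ l ≠ [] ∧
  G.t (l.getLastD e) = G.o (l.headD e) ∧
  (∃ k : ℤ, G.q l = (k : ℚ)) ∧ G.q l ≠ 1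

/-- A mobile edge. -/
def Mobile (G : LGraph V E) (e : E) : Prop :=
  (∃ l, G.IsStrictMonotoneCycle l e ∨ G.IsStrictMonotoneCycle l (G.bar e)) ∨
  (∃ l, G.IsStrictIntegerCycle e l ∨ G.IsStrictIntegerCycle (G.bar e) l)

/-- The single slide of `e` over `f` is permitted. -/
def CanSlide (G : LGraph V E) (e f : E) : Prop :=
  f ≠ e ∧ f ≠ G.bar e ∧ G.o f = G.o e ∧ G.lab f ∣ G.lab e

open Classical in
/-- The result of the single slide of `e` over `f`. -/
noncomputable def slide (G : LGraph V E) (e f : E) : LGraph V E where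
  o := fun x => if x = e then G.t f else G.o x
  bar := G.bar
  bar_bar := G.bar_bar
  bar_ne := G.bar_ne
  lab := fun x => if x = e then G.lab e * G.lab (G.bar f) / G.lab f else G.lab x

/-- Successively slide `e` over the edges of a path. -/
noncomputable def slidePath : LGraph V E → E → List E → LGraph V E
  | G, _, [] => G
  | G, e, f :: l => slidePath (G.slide e f) e l

/-- Each single slide in the successive slide of `e` over a path is permitted. -/
def CanSlidePath : LGraph V E → E → List E → Prop
  | _, _, [] => True
  | G, e, f :: l => G.CanSlide e f ∧ CanSlidePath (G.slide e f) e l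

/-- Each single slide is permitted and each intermediate graph is reduced. -/
def GoodSlidePath : LGraph V E → E → List E → Prop
  | _, _, [] => True
  | G, e, f :: l => G.CanSlide e f ∧ (G.slide e f).Reduced ∧ GoodSlidePath (G.slide e f) e l

/-- Perform a finite sequence of single slides, given as pairs (slid edge, edge slid over). -/
noncomputable def slideSeq : LGraph V E → List (E × E) → LGraph V E
  | G, [] => G
  | G, p :: rest => slideSeq (G.slide p.1 p.2) rest

/-- A sequence of permitted single slides, each sliding a mobile edge. -/
def MobileSlideSeq : LGraph V E → List (E × E) → Prop
  | _, [] => True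
  | G, p :: rest => G.Mobile p.1 ∧ G.CanSlide p.1 p.2 ∧ MobileSlideSeq (G.slide p.1 p.2) rest

/-- Isomorphism of labeled graphs. -/
def Isom (G : LGraph V E) (G' : LGraph V' E') : Prop :=
  ∃ (φ : V → V') (Φ : E → E'),
    Function.Bijective φ ∧ Function.Bijective Φ ∧
    (∀ x, G'.o (Φ x) = φ (G.o x)) ∧
    (∀ x, G'.bar (Φ x) = Φ (G.bar x)) ∧
    (∀ x, G'.lab (Φ x) = G.lab x)

open Classical in
/-- The result of the induction move at the loop `e` with multiplier `m`. -/
noncomputable def inductionMove (G : LGraph V E) (e : E) (m : ℤ) : LGraph V E where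
  o := G.o
  bar := G.bar
  bar_bar := G.bar_bar
  bar_ne := G.bar_ne
  lab := fun x => if x ≠ e ∧ x ≠ G.bar e ∧ G.o x = G.o e then m * G.lab x else G.lab x

/-- `G'` is obtained from `G` by a single slide move (up to isomorphism). -/
def IsSlideMove (G : LGraph V E) (G' : LGraph V' E') : Prop :=
  ∃ e f, G.CanSlide e f ∧ Isom G' (G.slide e f)

/-- `G'` is obtained from `G` by a (forward) induction move. -/
def IsInductionMove (G : LGraph V E) (G' : LGraph V' E') : Prop :=
  ∃ (e : E) (m : ℤ), G.o e = G.t e ∧ G.lab e = 1 ∧ 1 ≤ m ∧ m ∣ G.lab (G.bar e) ∧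
    Isom G' (G.inductionMove e m)

/-- `G'` is obtained from `G` by an A-move. -/
def IsAMove (G : LGraph V E) (G' : LGraph V' E') : Prop :=
  ∃ (e d : E) (e' : E') (φ : V → V') (Φ : E → E'),
    G.o e = G.t e ∧ G.lab e = 1 ∧ G.lab (G.bar e) ≠ 1 ∧
    G.o d = G.o e ∧ G.t d ≠ G.o e ∧
    G.lab d ≠ 1 ∧ G.lab (G.bar d) ≠ 1 ∧ G.lab d ∣ G.lab (G.bar e) ∧
    (∀ x : E, G.o x = G.o e → x = e ∨ x = G.bar e ∨ x = d) ∧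
    G'.o e' = φ (G.t d) ∧ G'.t e' = φ (G.t d) ∧
    G'.lab e' = G.lab (G.bar d) ∧
    G'.lab (G'.bar e') = G.lab (G.bar d) * G.lab (G.bar e) ∧
    (∀ w₁ w₂ : V, w₁ ≠ G.o e → w₂ ≠ G.o e → φ w₁ = φ w₂ → w₁ = w₂) ∧
    (∀ v' : V', ∃ w : V, w ≠ G.o e ∧ φ w = v') ∧
    (∀ x : E, x ≠ e → x ≠ G.bar e → x ≠ d → x ≠ G.bar d →
      Φ x ≠ e' ∧ Φ x ≠ G'.bar e' ∧
      G'.o (Φ x) = φ (G.o x) ∧ G'.bar (Φ x) = Φ (G.bar x) ∧ G'.lab (Φ x) = G.lab x) ∧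
    (∀ x y : E, x ≠ e → x ≠ G.bar e → x ≠ d → x ≠ G.bar d →
      y ≠ e → y ≠ G.bar e → y ≠ d → y ≠ G.bar d → Φ x = Φ y → x = y) ∧
    (∀ y : E', y ≠ e' → y ≠ G'.bar e' →
      ∃ x : E, x ≠ e ∧ x ≠ G.bar e ∧ x ≠ d ∧ x ≠ G.bar d ∧ Φ x = y)

/-- A strict ascending loop: a loop with `λ(e) = 1 ≠ λ(ē)`. -/
def HasStrictAscendingLoop (G : LGraph V E) : Prop :=
  ∃ e : E, G.o e = G.t e ∧ G.lab e = 1 ∧ G.lab (G.bar e) ≠ 1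

end LGraph

/-- A labeled graph with its vertex and edge types bundled. -/
structure BGraph where
  V : Type
  E : Type
  G : LGraph V E

/-- An elementary deformation move: a slide, an induction move or its inverse,
or an A-move or its inverse. -/
def BGraph.ElemMove (X Y : BGraph) : Prop :=
  LGraph.IsSlideMove X.G Y.G ∨ LGraph.IsInductionMove X.G Y.G ∨
  LGraph.IsInductionMove Y.G X.G ∨ LGraph.IsAMove X.G Y.G ∨ LGraph.IsAMove Y.G X.G

/-- A finite sequence of elementary moves with all intermediate graphs reduced. -/
def BGraph.MoveSeq : BGraph → BGraph → Prop :=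
  Relation.ReflTransGen (fun X Y => X.ElemMove Y ∧ Y.G.Reduced)

/-- A reduced labeled graph is non-ascending if no reduced labeled graph obtained from it
by slide, induction and A-moves (all intermediate graphs reduced) contains a
strict ascending loop. -/
def LGraph.NonAscending {V E : Type} (G : LGraph V E) : Prop :=
  ∀ Y : BGraph, BGraph.MoveSeq ⟨V, E, G⟩ Y → ¬ Y.G.HasStrictAscendingLoop

namespace LGraph

/-- One move of a label `m * lab x` at `o x` across an edge `x ∉ {e, ē}`. -/
def Step {V E : Type} (G : LGraph V E) (e : E) (p p' : V × ℤ) : Prop :=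
  ∃ (x : E) (m : ℤ), x ≠ e ∧ x ≠ G.bar e ∧ p = (G.o x, m * G.lab x) ∧
    p' = (G.o (G.bar x), m * G.lab (G.bar x))

/-- Reachability in terms of moves. -/
def Reach {V E : Type} (G : LGraph V E) (e : E) : V × ℤ → V × ℤ → Prop :=
  Relation.ReflTransGen (G.Step e)

/-- Path data, generalized to an arbitrary starting label and starting vertex `t d`. -/
def Pth {V E : Type} (G : LGraph V E) (e d : E) (n : ℤ) (l : List E) (w : V) (m : ℤ) : Prop :=
  List.IsChain (fun a b => G.t a = G.o b) (d :: l) ∧ (∀ a ∈ l, a ≠ e ∧ a ≠ G.bar e) ∧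
  (∀ i : Fin l.length, ∃ k : ℤ, (n : ℚ) * G.q (l.take i.1) = (k : ℚ) * (G.lab (l.get i) : ℚ)) ∧
  G.t (l.getLastD d) = w ∧ (n : ℚ) * G.q l = m

theorem pth_nil {V E : Type} (G : LGraph V E) (e d : E) (n : ℤ) (w : V) (m : ℤ) :
    G.Pth e d n [] w m ↔ G.t d = w ∧ n = m := by
  simp [Pth, q]

theorem pth_cons {V E : Type} (G : LGraph V E) (hpos : G.Positive) (e d a : E) (n : ℤ)
    (l : List E) (w : V) (m : ℤ) :
    G.Pth e d n (a :: l) w m ↔ (a ≠ e ∧ a ≠ G.bar e) ∧ G.t d = G.o a ∧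
      ∃ k : ℤ, n = k * G.lab a ∧ G.Pth e a (k * G.lab (G.bar a)) l w m := by
  have ha : (G.lab a : ℚ) ≠ 0 := by exact_mod_cast (hpos a).ne'
  have key : ∀ (k : ℤ) (l' : List E), n = k * G.lab a →
      (n : ℚ) * G.q (a :: l') = ((k * G.lab (G.bar a) : ℤ) : ℚ) * G.q l' := by
    intro k l' h
    subst h
    simp only [q, List.map_cons, List.prod_cons, qe]
    push_cast
    field_simp
  constructor
  · rintro ⟨h1, h2, h3, h4, h5⟩
    rw [List.isChain_cons_cons] at h1
    obtain ⟨k, hk⟩ := h3 ⟨0, by simp⟩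
    have hn : n = k * G.lab a := by
      simp [q] at hk
      exact_mod_cast hk
    refine ⟨h2 a (by simp), h1.1, k, hn, h1.2, fun b hb => h2 b (by simp [hb]), ?_, ?_, ?_⟩
    · intro i
      obtain ⟨j, hj⟩ := h3 i.succ
      refine ⟨j, ?_⟩
      rw [← key k _ hn]
      simpa using hj
    · rwa [List.getLastD_cons] at h4
    · rw [← key k _ hn]; exact h5
  · rintro ⟨h0, hd, k, hn, h1, h2, h3, h4, h5⟩
    refine ⟨List.isChain_cons_cons.2 ⟨hd, h1⟩, ?_, ?_, ?_, ?_⟩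
    · intro b hb
      rcases List.mem_cons.1 hb with rfl | hb
      · exact h0
      · exact h2 b hb
    · intro i
      refine Fin.cases ?_ ?_ i
      · refine ⟨k, ?_⟩
        simp [q, hn]
      · intro i
        obtain ⟨j, hj⟩ := h3 i
        refine ⟨j, ?_⟩
        have := key k (l.take i.1) hn
        simpa [this] using hj
    · rwa [List.getLastD_cons]
    · rw [key k _ hn]; exact h5

theorem pth_reach {V E : Type} (G : LGraph V E) (hpos : G.Positive) (e : E) (l : List E) :
    ∀ (d : E) (n : ℤ) (w : V) (m : ℤ), G.Pth e d n l w m → G.Reach e (G.t d, n) (w, m) := by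
  induction l with
  | nil =>
    intro d n w m h
    obtain ⟨rfl, rfl⟩ := (G.pth_nil e d n w m).1 h
    exact Relation.ReflTransGen.refl
  | cons a l ih =>
    intro d n w m h
    obtain ⟨h0, hd, k, rfl, h'⟩ := (G.pth_cons hpos e d a n l w m).1 h
    exact Relation.ReflTransGen.head ⟨a, k, h0.1, h0.2, by rw [hd], rfl⟩ (ih _ _ _ _ h')

theorem reach_pth {V E : Type} (G : LGraph V E) (hpos : G.Positive) (e : E) (p p' : V × ℤ)
    (h : G.Reach e p p') : ∀ d, G.t d = p.1 → ∃ l, G.Pth e d p.2 l p'.1 p'.2 := by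
  induction h using Relation.ReflTransGen.head_induction_on with
  | refl => intro d hd; exact ⟨[], (G.pth_nil _ _ _ _ _).2 ⟨hd, rfl⟩⟩
  | head hs _ ih =>
    intro d hd
    obtain ⟨x, m, hx1, hx2, rfl, rfl⟩ := hs
    obtain ⟨l, hl⟩ := ih x rfl
    exact ⟨x :: l, (G.pth_cons hpos _ _ _ _ _ _ _).2 ⟨⟨hx1, hx2⟩, hd, m, rfl, hl⟩⟩

theorem smc_iff {V E : Type} (G : LGraph V E) (hpos : G.Positive) (l : List E) (e : E) :
    G.IsStrictMonotoneCycle l e ↔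
      ∃ k : ℤ, k ≠ 1 ∧ G.Pth e e (G.lab (G.bar e)) l (G.o e) (k * G.lab e) := by
  have ha : (G.lab e : ℚ) ≠ 0 := by exact_mod_cast (hpos e).ne'
  have hq : ∀ k : ℤ, G.q (l ++ [e]) = (k : ℚ) ↔
      (G.lab (G.bar e) : ℚ) * G.q l = ((k * G.lab e : ℤ) : ℚ) := by
    intro k
    simp only [q, List.map_append, List.prod_append, List.map_cons, List.map_nil, List.prod_cons,
      List.prod_nil, mul_one, qe]
    push_cast
    rw [← mul_div_assoc, div_eq_iff ha, mul_comm]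
  have hch : List.IsChain (fun a b => G.t a = G.o b) (e :: l) ↔
      (G.IsEdgePath l ∧ ∀ a ∈ l.head?, G.o a = G.o (G.bar e)) := by
    unfold IsEdgePath
    rw [List.isChain_cons, and_comm]
    simp only [t, eq_comm]
    exact Iff.rfl
  constructor
  · rintro ⟨⟨⟨h1, h2, h3, h4⟩, h5, k, h6⟩, h7⟩
    refine ⟨k, ?_, hch.2 ⟨h1, h3⟩, ?_, h4, h5, (hq k).1 h6⟩
    · rintro rfl; exact h7 (by simpa using h6)
    · intro a hal; have := h2 a hal; rw [G.bar_bar] at this; exact this.symm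
  · rintro ⟨k, hk, h1, h2, h3, h4, h5⟩
    have h6 := (hq k).2 h5
    refine ⟨⟨⟨(hch.1 h1).1, ?_, (hch.1 h1).2, h3⟩, h4, k, h6⟩, ?_⟩
    · intro a hal; rw [G.bar_bar]; exact (h2 a hal).symm
    · rw [h6]; exact_mod_cast hk

end LGraph

/-- If a reduced, positively-labeled graph `Γ` has a strict monotone cycle
`(e₁,…,eₛ,e)` and a reduced `Γ'` is obtained by a single slide of one of `e, ē, eᵢ, ēᵢ`
over an edge `f ∉ {e, ē}`, then `Γ'` contains a strict monotone cycle. -/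
theorem stmt0 {V E : Type} [Finite V] [Finite E] (G : LGraph V E)
    (hpos : G.Positive) (hred : G.Reduced)
    (l : List E) (e : E) (hsmc : G.IsStrictMonotoneCycle l e)
    (g f : E)
    (hg : g = e ∨ g = G.bar e ∨ g ∈ l ∨ G.bar g ∈ l)
    (hfe : f ≠ e) (hfebar : f ≠ G.bar e)
    (hcan : G.CanSlide g f)
    (hred' : (G.slide g f).Reduced) :
    (G.slide g f).HasStrictMonotoneCycle := by
  classical
  obtain ⟨hfg, hfg', hof, c, hc⟩ := hcan
  have hlab : G.lab g * G.lab (G.bar f) / G.lab f = c * G.lab (G.bar f) := by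
    rw [hc, mul_assoc, mul_comm (G.lab f)]
    exact (Int.mul_ediv_cancel _ (hpos f).ne')
  have hcpos : 0 < c := by
    have h1 := hpos g
    rw [hc] at h1
    exact pos_of_mul_pos_right h1 (hpos f).le
  have hfb : G.bar f ≠ g := fun h => hfg' (by rw [← h, G.bar_bar])
  have hbfe : G.bar f ≠ e := fun h => hfebar (by rw [← h, G.bar_bar])
  have hbfe' : G.bar f ≠ G.bar e := fun h => hfe (by rw [← G.bar_bar f, h, G.bar_bar])
  obtain ⟨k, hk, hp⟩ := (G.smc_iff hpos l e).1 hsmc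
  have hr := G.pth_reach hpos e l _ _ _ _ hp
  set G' := G.slide g f with hG'
  have hbar : ∀ x, G'.bar x = G.bar x := fun x => rfl
  have hog : G'.o g = G.o (G.bar f) := by simp [hG', LGraph.slide, LGraph.t]
  have hlg : G'.lab g = c * G.lab (G.bar f) := by simp [hG', LGraph.slide, hlab]
  have ho : ∀ x, x ≠ g → G'.o x = G.o x := fun x hx => by simp [hG', LGraph.slide, hx]
  have hl : ∀ x, x ≠ g → G'.lab x = G.lab x := fun x hx => by simp [hG', LGraph.slide, hx]
  have hpos' : G'.Positive := by
    intro x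
    by_cases hx : x = g
    · rw [hx, hlg]; exact mul_pos hcpos (hpos _)
    · rw [hl x hx]; exact hpos x
  have sf : ∀ m : ℤ, G'.Reach e (G.o g, m * G.lab g) (G'.o g, m * G'.lab g) := by
    intro m
    refine Relation.ReflTransGen.single ⟨f, m * c, hfe, hfebar, ?_, ?_⟩
    · rw [ho f hfg, hl f hfg, hof, hc]; congr 1; ring
    · rw [hbar, ho _ hfb, hl _ hfb, hog, hlg]; congr 1; ring
  have sb : ∀ m : ℤ, G'.Reach e (G'.o g, m * G'.lab g) (G.o g, m * G.lab g) := by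
    intro m
    refine Relation.ReflTransGen.single ⟨G.bar f, m * c, hbfe, hbfe', ?_, ?_⟩
    · rw [ho _ hfb, hl _ hfb, hog, hlg]; congr 1; ring
    · rw [hbar, G.bar_bar, ho f hfg, hl f hfg, hof, hc]; congr 1; ring
  have toN : ∀ (x : E) (m : ℤ), G'.Reach e (G.o x, m * G.lab x) (G'.o x, m * G'.lab x) := by
    intro x m
    by_cases hx : x = g
    · rw [hx]; exact sf m
    · rw [ho x hx, hl x hx]; exact Relation.ReflTransGen.refl
  have frN : ∀ (x : E) (m : ℤ), G'.Reach e (G'.o x, m * G'.lab x) (G.o x, m * G.lab x) := by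
    intro x m
    by_cases hx : x = g
    · rw [hx]; exact sb m
    · rw [ho x hx, hl x hx]; exact Relation.ReflTransGen.refl
  have hmain : ∀ p p', G.Reach e p p' → G'.Reach e p p' := by
    intro p p' h
    induction h with
    | refl => exact Relation.ReflTransGen.refl
    | tail _ hs ih =>
      obtain ⟨x, m, hx1, hx2, rfl, rfl⟩ := hs
      refine ih.trans ((toN x m).trans (Relation.ReflTransGen.trans ?_ (frN (G.bar x) m)))
      exact Relation.ReflTransGen.single ⟨x, m, hx1, hx2, rfl, rfl⟩
  have hfin : G'.Reach e (G'.t e, G'.lab (G'.bar e)) (G'.o e, k * G'.lab e) := by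
    have h1 := frN (G.bar e) 1
    rw [one_mul, one_mul] at h1
    exact h1.trans ((hmain _ _ hr).trans (toN e k))
  obtain ⟨l', hl'⟩ := G'.reach_pth hpos' e _ _ hfin e rfl
  exact ⟨l', e, (G'.smc_iff hpos' l' e).2 ⟨k, hk, hl'⟩⟩
end

section
/- Let Γ be an n-rose labeled graph with all labels positive and n ≤ 3, and let γ = (e₁,…,eₛ,e) be a strict monotone cycle in Γ for some s ≥ 0. Suppose Γ′ is obtained from Γ by a single slide move of eᵢ or ēᵢ (for some 1 ≤ i ≤ s) over the edge ē. Then Γ′ contains a strict monotone cycle. -/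
namespace LGraph

variable {V E : Type}

/-- Recursive form of the divisibility condition along a path started at the number `x`. -/
def Adm (G : LGraph V E) : ℚ → List E → Prop
  | _, [] => True
  | x, a :: l => (∃ k : ℤ, x = (k : ℚ) * (G.lab a : ℚ)) ∧ Adm G (x * G.qe a) l

theorem q_nil (G : LGraph V E) : G.q [] = 1 := by simp [q]

theorem q_cons (G : LGraph V E) (a : E) (l : List E) : G.q (a :: l) = G.qe a * G.q l := by
  simp [q]

theorem q_append (G : LGraph V E) (l l' : List E) : G.q (l ++ l') = G.q l * G.q l' := by
  simp [q]

theorem adm_iff (G : LGraph V E) (l : List E) (x : ℚ) :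
    (∀ i : Fin l.length, ∃ k : ℤ, x * G.q (l.take i.1) = (k : ℚ) * (G.lab (l.get i) : ℚ)) ↔
      Adm G x l := by
  induction l generalizing x with
  | nil => simp [Adm]
  | cons a l ih =>
    have h2 := ih (x * G.qe a)
    constructor
    · intro h
      refine ⟨?_, h2.1 ?_⟩
      · simpa [q_nil] using h ⟨0, by simp⟩
      · intro i
        have := h i.succ
        simpa [q_cons, mul_assoc] using this
    · rintro ⟨h, h'⟩ i
      refine Fin.cases ?_ ?_ i
      · simpa [q_nil] using h
      · intro i
        have := h2.2 h' i
        simpa [q_cons, mul_assoc] using this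

theorem adm_append (G : LGraph V E) (l l' : List E) (x : ℚ) :
    Adm G x (l ++ l') ↔ Adm G x l ∧ Adm G (x * G.q l) l' := by
  induction l generalizing x with
  | nil => simp [Adm, q_nil]
  | cons a l ih => simp [Adm, q_cons, ih, and_assoc, mul_assoc]

theorem adm_scale (G : LGraph V E) (l : List E) (x : ℚ) (c : ℤ) (h : Adm G x l) :
    Adm G (c * x) l := by
  induction l generalizing x with
  | nil => trivial
  | cons a l ih =>
    obtain ⟨⟨k, hk⟩, h'⟩ := h
    refine ⟨⟨c * k, by rw [hk]; push_cast; ring⟩, ?_⟩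
    rw [mul_assoc]
    exact ih _ h'

theorem slide_lab_ne (G : LGraph V E) {g f x : E} (h : x ≠ g) :
    (G.slide g f).lab x = G.lab x := by simp [slide, h]

theorem slide_qe (G : LGraph V E) {g f x : E} (h : x ≠ g) (h' : x ≠ G.bar g) :
    (G.slide g f).qe x = G.qe x := by
  have h2 : G.bar x ≠ g := by
    rintro rfl; exact h' (G.bar_bar x).symm
  have h3 := G.slide_lab_ne (f := f) h2
  have h4 := G.slide_lab_ne (f := f) h
  have h5 : (G.slide g f).bar x = G.bar x := rfl
  simp only [qe, h3, h4, h5]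

theorem slide_q (G : LGraph V E) {g f : E} (l : List E)
    (h : ∀ x ∈ l, x ≠ g ∧ x ≠ G.bar g) : (G.slide g f).q l = G.q l := by
  induction l with
  | nil => simp [q_nil]
  | cons a l ih =>
    rw [q_cons, q_cons, ih (fun x hx => h x (by simp [hx])),
      slide_qe G (h a (by simp)).1 (h a (by simp)).2]

theorem slide_adm (G : LGraph V E) {g f : E} (l : List E)
    (h : ∀ x ∈ l, x ≠ g ∧ x ≠ G.bar g) (x : ℚ) (hx : Adm G x l) :
    Adm (G.slide g f) x l := by
  induction l generalizing x with
  | nil => trivial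
  | cons a l ih =>
    have ha := h a (by simp)
    refine ⟨?_, ?_⟩
    · rw [slide_lab_ne G ha.1]; exact hx.1
    · rw [slide_qe G ha.1 ha.2]
      exact ih (fun x hx => h x (by simp [hx])) _ hx.2

theorem mk_cycle [Subsingleton V] (G : LGraph V E) (l : List E) (e : E) (k : ℤ)
    (hl : ∀ a ∈ l, a ≠ e ∧ a ≠ G.bar e) (hadm : Adm G (G.lab (G.bar e)) l)
    (hq : G.q (l ++ [e]) = k) (hk : k ≠ 1) : G.HasStrictMonotoneCycle := by
  refine ⟨l, e, ⟨⟨?_, ?_, ?_, ?_⟩, Subsingleton.elim _ _, k, hq⟩, ?_⟩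
  · unfold IsEdgePath
    have : (fun a b => G.t a = G.o b) = fun (_ _ : E) => True := by
      funext a b; simp [Subsingleton.elim (G.t a) (G.o b)]
    rw [this]
    clear hl hadm hq this
    induction l with
    | nil => exact List.isChain_nil
    | cons a l ih => 
      cases l with
      | nil => exact List.isChain_singleton a
      | cons b l => exact List.isChain_cons_cons.2 ⟨trivial, ih⟩
  · intro a ha
    rw [G.bar_bar]
    exact ⟨(hl a ha).2, (hl a ha).1⟩
  · intro a _; exact Subsingleton.elim _ _
  · exact (adm_iff G l _).2 hadm
  · rw [hq]; exact_mod_cast hk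

theorem split_first {α : Type} (P : α → Prop) (l : List α) :
    (∀ x ∈ l, ¬ P x) ∨ ∃ w a l', l = w ++ a :: l' ∧ (∀ x ∈ w, ¬ P x) ∧ P a := by
  induction l with
  | nil => simp
  | cons b l ih =>
    by_cases hb : P b
    · exact Or.inr ⟨[], b, l, by simp, by simp, hb⟩
    · rcases ih with h | ⟨w, a, l', rfl, h1, h2⟩
      · left; intro x hx
        rcases List.mem_cons.1 hx with rfl | hx
        exacts [hb, h x hx]
      · refine Or.inr ⟨b :: w, a, l', by simp, ?_, h2⟩
        intro x hx
        rcases List.mem_cons.1 hx with rfl | hx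
        exacts [hb, h1 x hx]

theorem qe_ne_zero (G : LGraph V E) (hpos : G.Positive) (a : E) : G.qe a ≠ 0 := by
  have h1 := hpos a
  have h2 := hpos (G.bar a)
  unfold qe
  positivity

theorem qe_bar (G : LGraph V E) (a : E) : G.qe (G.bar a) = (G.qe a)⁻¹ := by
  simp [qe, G.bar_bar]

theorem int_of_pow (x : ℚ) (n : ℕ) (hn : n ≠ 0) (k : ℤ) (h : x ^ n = k) : ∃ m : ℤ, x = m := by
  have h1 : (x ^ n).den = 1 := by rw [h]; simp
  rw [Rat.den_pow] at h1
  have h2 : x.den = 1 := by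
    exact (Nat.pow_eq_one.1 h1).resolve_right hn
  exact ⟨x.num, (Rat.coe_int_num_of_den_eq_one h2).symm⟩

theorem third_edge [Finite E] (G : LGraph V E) (hc : Nat.card E ≤ 6) (e g x y : E)
    (h1 : g ≠ e) (h2 : g ≠ G.bar e) (hx : x ≠ e ∧ x ≠ G.bar e ∧ x ≠ g ∧ x ≠ G.bar g)
    (hy : y ≠ e ∧ y ≠ G.bar e ∧ y ≠ g ∧ y ≠ G.bar g) : y = x ∨ y = G.bar x := by
  classical
  by_contra hne
  push Not at hne
  have := Fintype.ofFinite E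
  have key : ({e, G.bar e, g, G.bar g, x, G.bar x, y} : Finset E).card = 7 := by
    have b1 := G.bar_ne
    have b2 := G.bar_bar
    have b3 : ∀ a b, G.bar a = b → a = G.bar b := by rintro a b rfl; exact (b2 a).symm
    have b4 : ∀ a b, G.bar a = G.bar b → a = b := by
      intro a b h; rw [← b2 a, h, b2]
    rw [Finset.card_insert_of_notMem, Finset.card_insert_of_notMem, Finset.card_insert_of_notMem,
      Finset.card_insert_of_notMem, Finset.card_insert_of_notMem, Finset.card_insert_of_notMem,
      Finset.card_singleton]
    all_goals simp only [Finset.mem_insert, Finset.mem_singleton]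
    all_goals grind
  have h7 := Finset.card_le_univ ({e, G.bar e, g, G.bar g, x, G.bar x, y} : Finset E)
  rw [Nat.card_eq_fintype_card] at hc
  omega

theorem q_zpow (G : LGraph V E) (hpos : G.Positive) (h : E) (w : List E)
    (hw : ∀ x ∈ w, x = h ∨ x = G.bar h) : ∃ j : ℤ, G.q w = G.qe h ^ j := by
  induction w with
  | nil => exact ⟨0, by simp [q_nil]⟩
  | cons a w ih =>
    obtain ⟨j, hj⟩ := ih (fun x hx => hw x (by simp [hx]))
    have h0 := G.qe_ne_zero hpos h
    rcases hw a (by simp) with rfl | rfl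
    · exact ⟨1 + j, by rw [q_cons, hj, zpow_add₀ h0, zpow_one]⟩
    · exact ⟨-1 + j, by rw [q_cons, hj, zpow_add₀ h0, qe_bar, zpow_neg_one]⟩

/-- A word in the third edge with integral modulus has modulus one, unless the slid graph has a
strict monotone cycle of length one. -/
theorem q_eq_one [Finite E] [Subsingleton V] (G : LGraph V E) (hpos : G.Positive)
    (hc : Nat.card E ≤ 6) (e g f : E)
    (h1 : g ≠ e) (h2 : g ≠ G.bar e) (hno : ¬ (G.slide g f).HasStrictMonotoneCycle)
    (w : List E) (hw : ∀ x ∈ w, x ≠ e ∧ x ≠ G.bar e ∧ x ≠ g ∧ x ≠ G.bar g)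
    (k : ℤ) (hk : G.q w = k) : G.q w = 1 := by
  have hone : ∀ x : E, x ≠ g → x ≠ G.bar g → ∀ m : ℤ, G.qe x = m → G.qe x = 1 := by
    intro x hx hx' m hm
    by_contra hne
    refine hno (mk_cycle _ [] x m (by simp) trivial ?_ ?_)
    · rw [List.nil_append, q_cons, q_nil, mul_one, slide_qe G hx hx', hm]
    · rintro rfl; exact hne (by simpa using hm)
  cases w with
  | nil => exact q_nil G
  | cons h w =>
    have hh := hw h (by simp)
    obtain ⟨j, hj⟩ := q_zpow G hpos h (h :: w)
      (fun x hx => third_edge G hc e g h x h1 h2 hh (hw x hx))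
    by_cases hj0 : j = 0
    · rw [hj, hj0, zpow_zero]
    have hq1 : G.qe h = 1 := by
      rcases Int.natAbs_eq j with hj' | hj'
      · rw [hj, hj', zpow_natCast] at hk
        obtain ⟨m, hm⟩ := int_of_pow _ _ (by omega) _ hk
        exact hone h hh.2.2.1 hh.2.2.2 m hm
      · rw [hj, hj', zpow_neg, zpow_natCast, ← inv_pow, ← qe_bar] at hk
        obtain ⟨m, hm⟩ := int_of_pow _ _ (by omega) _ hk
        have := hone (G.bar h) (fun h' => hh.2.2.2 (by rw [← h', G.bar_bar]))
          (fun h' => hh.2.2.1 (by rw [← G.bar_bar h, h', G.bar_bar])) m hm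
        rw [qe_bar] at this
        exact inv_eq_one.1 this
    rw [hj, hq1, one_zpow]

theorem main_step [Finite E] [Subsingleton V] (G : LGraph V E) (hpos : G.Positive)
    (hc : Nat.card E ≤ 6) (e g : E) (h1 : g ≠ e) (h2 : g ≠ G.bar e)
    (hdvd : G.lab (G.bar e) ∣ G.lab g)
    (hno : ¬ (G.slide g (G.bar e)).HasStrictMonotoneCycle) (k : ℤ) (hk : k ≠ 1)
    (N : ℕ) : ∀ l : List E, l.length ≤ N → (∀ a ∈ l, a ≠ e ∧ a ≠ G.bar e) →
      Adm G (G.lab (G.bar e)) l →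
      (G.lab (G.bar e) : ℚ) * G.q l = k * G.lab e → False := by
  obtain ⟨c, hcg⟩ := hdvd
  have hM := hpos (G.bar e)
  have hm := hpos e
  have hb := hpos (G.bar g)
  have hgp := hpos g
  have hcpos : 0 < c := by rw [hcg] at hgp; exact pos_of_mul_pos_right hgp hM.le
  have hMq : (G.lab (G.bar e) : ℚ) ≠ 0 := by positivity
  have hmq : (G.lab e : ℚ) ≠ 0 := by positivity
  have hbq : (G.lab (G.bar g) : ℚ) ≠ 0 := by positivity
  have hcq : (c : ℚ) ≠ 0 := by positivity
  have hcgq : (G.lab g : ℚ) = G.lab (G.bar e) * c := by exact_mod_cast hcg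
  have e1 : e ≠ G.bar g := by rintro rfl; exact h2 (G.bar_bar g).symm
  have e2 : G.bar e ≠ G.bar g := by
    intro h; exact h1 (by rw [← G.bar_bar g, ← h, G.bar_bar])
  -- data of the slid graph
  have hbar : ∀ x, (G.slide g (G.bar e)).bar x = G.bar x := fun _ => rfl
  have lg : (G.slide g (G.bar e)).lab g = G.lab e * c := by
    have : (G.slide g (G.bar e)).lab g
        = G.lab g * G.lab (G.bar (G.bar e)) / G.lab (G.bar e) := by simp [slide]
    rw [this, G.bar_bar, hcg, mul_assoc, Int.mul_ediv_cancel_left _ hM.ne', mul_comm]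
  have lgb : (G.slide g (G.bar e)).lab (G.bar g) = G.lab (G.bar g) :=
    slide_lab_ne G (G.bar_ne g)
  have le : (G.slide g (G.bar e)).lab e = G.lab e := slide_lab_ne G h1.symm
  have leb : (G.slide g (G.bar e)).lab (G.bar e) = G.lab (G.bar e) := slide_lab_ne G h2.symm
  have qg : (G.slide g (G.bar e)).qe g = G.lab (G.bar g) / (G.lab e * c) := by
    simp only [qe, hbar, lg, lgb]; push_cast; rfl
  have qgb : (G.slide g (G.bar e)).qe (G.bar g) = (G.lab e * c) / G.lab (G.bar g) := by
    simp only [qe, hbar, lg, lgb, G.bar_bar]; push_cast; rfl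
  have qee : (G.slide g (G.bar e)).qe e = G.lab (G.bar e) / G.lab e := by
    simp only [qe, hbar, le, leb]
  have qeb : (G.slide g (G.bar e)).qe (G.bar e) = G.lab e / G.lab (G.bar e) := by
    simp only [qe, hbar, le, leb, G.bar_bar]
  have qgG : G.qe g = G.lab (G.bar g) / (G.lab (G.bar e) * c) := by
    simp only [qe, hcgq]
  have qgbG : G.qe (G.bar g) = (G.lab (G.bar e) * c) / G.lab (G.bar g) := by
    simp only [qe, hcgq, G.bar_bar]
  induction N with
  | zero =>
    intro l hl _ _ hq
    obtain rfl : l = [] := List.length_eq_zero_iff.1 (by omega)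
    refine hno (mk_cycle _ [] e k (by simp) trivial ?_ hk)
    rw [List.nil_append, q_cons, q_nil, mul_one, qee]
    rw [q_nil, mul_one] at hq
    rw [hq]; field_simp
  | succ N ih =>
    intro l hl hle hadm hq
    rcases split_first (fun x => x = g ∨ x = G.bar g) l with hl0 | ⟨w, a, l', rfl, hw, ha⟩
    · -- no letter of `g`
      have hl1 : ∀ x ∈ l, x ≠ g ∧ x ≠ G.bar g := fun x hx => not_or.1 (hl0 x hx)
      refine hno (mk_cycle _ l e k hle ?_ ?_ hk)
      · rw [hbar, leb]; exact slide_adm G l hl1 _ hadm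
      · rw [q_append, slide_q G l hl1, q_cons, q_nil, mul_one, qee]
        field_simp
        linarith
    · have hw1 : ∀ x ∈ w, x ≠ g ∧ x ≠ G.bar g := fun x hx => not_or.1 (hw x hx)
      have hwe : ∀ x ∈ w, x ≠ e ∧ x ≠ G.bar e := fun x hx => hle x (by simp [hx])
      have hle' : ∀ x ∈ l', x ≠ e ∧ x ≠ G.bar e := fun x hx => hle x (by simp [hx])
      have hlen : w.length + (l'.length + 1) ≤ N + 1 := by simpa using hl
      obtain ⟨hadw, ⟨y, hy⟩, hadl'⟩ := (adm_append G _ _ _).1 hadm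
      rw [q_append, q_cons] at hq
      rcases ha with rfl | rfl
      · -- first letter is `g`
        have hqw : G.q w = ((c * y : ℤ) : ℚ) := by
          rw [hcgq] at hy
          apply mul_left_cancel₀ hMq
          rw [hy]; push_cast; ring
        have hqw1 := q_eq_one G hpos hc e a (G.bar e) h1 h2 hno w
          (fun x hx => ⟨(hwe x hx).1, (hwe x hx).2, hw1 x hx⟩) _ hqw
        have hcy : c * y = 1 := by rw [hqw1] at hqw; exact_mod_cast hqw.symm
        have hc1 : c = 1 := Int.eq_one_of_dvd_one hcpos.le ⟨y, hcy.symm⟩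
        subst hc1
        rw [Int.cast_one] at *
        rw [hqw1, mul_one, qgG] at hadl'
        rw [hqw1, one_mul, qgG] at hq
        have hx : (G.lab (G.bar e) : ℚ) * (G.lab (G.bar a) / (G.lab (G.bar e) * 1))
            = G.lab (G.bar a) := by field_simp
        rw [hx] at hadl'
        rw [← mul_assoc, hx] at hq
        rcases split_first (fun x => x = a ∨ x = G.bar a) l' with
          hl0 | ⟨w2, a2, l2, rfl, hw2, ha2⟩
        · have hl1 : ∀ x ∈ l', x ≠ a ∧ x ≠ G.bar a := fun x hx => not_or.1 (hl0 x hx)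
          refine hno (mk_cycle _ l' a k hl1 ?_ ?_ hk)
          · rw [hbar, lgb]; exact slide_adm G l' hl1 _ hadl'
          · rw [q_append, slide_q G l' hl1, q_cons, q_nil, mul_one, qg]
            field_simp
            linarith
        · have hw21 : ∀ x ∈ w2, x ≠ a ∧ x ≠ G.bar a := fun x hx => not_or.1 (hw2 x hx)
          have hw2e : ∀ x ∈ w2, x ≠ e ∧ x ≠ G.bar e := fun x hx => hle' x (by simp [hx])
          have hle2 : ∀ x ∈ l2, x ≠ e ∧ x ≠ G.bar e := fun x hx => hle' x (by simp [hx])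
          have hlen2 : w.length + (w2.length + (l2.length + 1) + 1) ≤ N + 1 := by
            simpa using hlen
          obtain ⟨hadw2, ⟨z, hz⟩, hadl2⟩ := (adm_append G _ _ _).1 hadl'
          rw [q_append, q_cons] at hq
          rcases ha2 with rfl | rfl
          · -- second letter is `g` again
            rw [hcgq, mul_one] at hz
            have hz1 : z = 1 := by
              by_contra hz1
              refine hno (mk_cycle _ (w2 ++ [G.bar e]) a2 z ?_ ?_ ?_ hz1)
              · intro x hx
                rw [hbar]
                rcases List.mem_append.1 hx with hx | hx
                · exact hw21 x hx
                · rw [List.mem_singleton.1 hx]; exact ⟨h2.symm, e2⟩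
              · rw [hbar, lgb, adm_append]
                refine ⟨slide_adm G w2 hw21 _ hadw2, ⟨z, ?_⟩, trivial⟩
                rw [slide_q G w2 hw21, leb, hz]
              · rw [q_append, q_append, slide_q G w2 hw21, q_cons, q_nil, q_cons, q_nil, qg, qeb]
                field_simp
                linarith
            rw [hz1, Int.cast_one, one_mul] at hz
            refine ih (a2 :: l2) (by simp; omega) ?_ ⟨⟨1, ?_⟩, ?_⟩ ?_
            · intro x hx
              rcases List.mem_cons.1 hx with rfl | hx
              exacts [⟨h1, h2⟩, hle2 x hx]
            · rw [hcgq]; simp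
            · rw [hz] at hadl2; exact hadl2
            · rw [q_cons, ← hz, mul_assoc, hq]
          · -- second letter is `bar g`
            have hqw2 : G.q w2 = (z : ℚ) := by
              apply mul_left_cancel₀ hbq
              rw [hz]; ring
            have hqw21 := q_eq_one G hpos hc e a (G.bar e) h1 h2 hno w2
              (fun x hx => ⟨(hw2e x hx).1, (hw2e x hx).2, hw21 x hx⟩) _ hqw2
            have hx2 : (G.lab (G.bar a) : ℚ) * G.qe (G.bar a) = G.lab (G.bar e) := by
              rw [qgbG]; field_simp
            rw [hqw21, mul_one, hx2] at hadl2
            rw [hqw21, one_mul, ← mul_assoc, hx2] at hq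
            exact ih l2 (by omega) hle2 hadl2 hq
      · -- first letter is `bar g`
        have hcy : c * y = 1 := by
          by_contra hcy
          refine hno (mk_cycle _ (e :: w) (G.bar g) (c * y) ?_ ?_ ?_ hcy)
          · intro x hx
            rw [hbar, G.bar_bar]
            rcases List.mem_cons.1 hx with rfl | hx
            · exact ⟨e1, h1.symm⟩
            · exact ⟨(hw1 x hx).2, (hw1 x hx).1⟩
          · rw [hbar, G.bar_bar, lg]
            refine ⟨⟨c, by rw [le]; push_cast; ring⟩, ?_⟩
            have hx : ((G.lab e * c : ℤ) : ℚ) * (G.slide g (G.bar e)).qe e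
                = c * G.lab (G.bar e) := by
              rw [qee]; push_cast; field_simp
            rw [hx]
            exact adm_scale _ _ _ _ (slide_adm G w hw1 _ hadw)
          · rw [q_append, q_cons, q_cons, q_nil, slide_q G w hw1, qee, qgb]
            push_cast
            field_simp
            linear_combination hy
        have hcyq : (c : ℚ) * y = 1 := by exact_mod_cast hcy
        have hx : (G.lab (G.bar e) : ℚ) * G.q w * G.qe (G.bar g) = G.lab (G.bar e) := by
          rw [hy, qgbG]
          field_simp
          linear_combination hcyq
        rw [hx] at hadl'
        rw [← mul_assoc, ← mul_assoc, hx] at hq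
        exact ih l' (by omega) hle' hadl' hq

end LGraph

/-- In an `n`-rose with positive labels, `n ≤ 3`, carrying a strict monotone
cycle `(e₁,…,eₛ,e)`, sliding some `eᵢ` or `ēᵢ` over the edge `ē` yields a graph which again
contains a strict monotone cycle. -/
theorem stmt2 {V E : Type} [Finite V] [Finite E] (G : LGraph V E) (n : ℕ)
    (hn : n ≤ 3) (hrose : G.IsRose n) (hpos : G.Positive)
    (l : List E) (e : E) (hsmc : G.IsStrictMonotoneCycle l e)
    (g : E) (hg : g ∈ l ∨ G.bar g ∈ l)
    (hcan : G.CanSlide g (G.bar e)) :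
    (G.slide g (G.bar e)).HasStrictMonotoneCycle := by
  by_contra hno
  have : Subsingleton V := (Nat.card_eq_one_iff_unique.1 hrose.1).1
  obtain ⟨⟨⟨_, hl, _, hadm⟩, _, k, hk⟩, hne⟩ := hsmc
  obtain ⟨c1, c2, _, c4⟩ := hcan
  have h2 : g ≠ G.bar e := fun h => c1 h.symm
  have h1 : g ≠ e := by rintro rfl; exact c2 rfl
  have hm : (G.lab e : ℚ) ≠ 0 := by
    have := hpos e
    positivity
  refine LGraph.main_step G hpos (by rw [hrose.2]; omega) e g h1 h2 c4 hno k ?_ l.length l le_rfl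
    ?_ ((LGraph.adm_iff G l _).1 hadm) ?_
  · rintro rfl; exact hne (by simpa using hk)
  · intro a ha
    have := hl a ha
    rw [G.bar_bar] at this
    exact ⟨this.2, this.1⟩
  · rw [LGraph.q_append, LGraph.q_cons, LGraph.q_nil, mul_one, LGraph.qe] at hk
    rw [← hk]
    field_simp
end

section
/- There do not exist integers a, b, c and k such that, in the rational numbers, 30·(15/7)^a·(5/2)^b·(4/5)^c = 21·k. -/
theorem aux_val (p : ℕ) [Fact p.Prime] (a b c k : ℤ)
    (h : (30 : ℚ) * (15 / 7 : ℚ) ^ a * (5 / 2 : ℚ) ^ b * (4 / 5 : ℚ) ^ c = 21 * (k : ℚ)) :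
    padicValRat p 21 ≤ padicValRat p 30 + a * (padicValRat p 15 - padicValRat p 7)
      + b * (padicValRat p 5 - padicValRat p 2) + c * (padicValRat p 4 - padicValRat p 5) := by
  have hk : (k : ℚ) ≠ 0 := by
    intro hk
    rw [hk, mul_zero] at h
    have : (30 : ℚ) * (15 / 7 : ℚ) ^ a * (5 / 2 : ℚ) ^ b * (4 / 5 : ℚ) ^ c ≠ 0 := by positivity
    exact this h
  have h1 := congrArg (padicValRat p) h
  rw [padicValRat.mul (by positivity) (by positivity),
    padicValRat.mul (by positivity) (by positivity),
    padicValRat.mul (by positivity) (by positivity),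
    padicValRat.mul (by norm_num) hk, padicValRat.zpow, padicValRat.zpow,
    padicValRat.zpow, padicValRat.div (by norm_num) (by norm_num),
    padicValRat.div (by norm_num) (by norm_num),
    padicValRat.div (by norm_num) (by norm_num), padicValRat.of_int] at h1
  have : (0 : ℤ) ≤ (padicValInt p k : ℤ) := by positivity
  linarith

theorem val_of_eq (p : ℕ) [hp : Fact p.Prime] (e m : ℕ) (q : ℚ) (hq : q = ((p ^ e * m : ℕ) : ℚ))
    (hm : ¬ p ∣ m) : padicValRat p q = e := by
  have hm0 : m ≠ 0 := by rintro rfl; simp at hm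
  rw [hq, padicValRat.of_nat, padicValNat.mul (pow_ne_zero _ hp.out.ne_zero) hm0,
    padicValNat.prime_pow, padicValNat.eq_zero_of_not_dvd hm, add_zero]

/-- There are no integers `a, b, c, k` with
`30·(15/7)^a·(5/2)^b·(4/5)^c = 21·k` in `ℚ`. -/
theorem stmt4 :
    ¬ ∃ (a b c k : ℤ),
      (30 : ℚ) * (15 / 7 : ℚ) ^ a * (5 / 2 : ℚ) ^ b * (4 / 5 : ℚ) ^ c = 21 * (k : ℚ) := by
  rintro ⟨a, b, c, k, h⟩
  haveI : Fact (Nat.Prime 3) := ⟨by norm_num⟩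
  haveI : Fact (Nat.Prime 7) := ⟨by norm_num⟩
  have h3 := aux_val 3 a b c k h
  have h7 := aux_val 7 a b c k h
  rw [val_of_eq 3 1 7 21 (by norm_num) (by norm_num), val_of_eq 3 1 10 30 (by norm_num) (by norm_num),
    val_of_eq 3 1 5 15 (by norm_num) (by norm_num), val_of_eq 3 0 7 7 (by norm_num) (by norm_num),
    val_of_eq 3 0 5 5 (by norm_num) (by norm_num), val_of_eq 3 0 2 2 (by norm_num) (by norm_num),
    val_of_eq 3 0 4 4 (by norm_num) (by norm_num)] at h3
  rw [val_of_eq 7 1 3 21 (by norm_num) (by norm_num), val_of_eq 7 0 30 30 (by norm_num) (by norm_num),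
    val_of_eq 7 0 15 15 (by norm_num) (by norm_num), val_of_eq 7 1 1 7 (by norm_num) (by norm_num),
    val_of_eq 7 0 5 5 (by norm_num) (by norm_num), val_of_eq 7 0 2 2 (by norm_num) (by norm_num),
    val_of_eq 7 0 4 4 (by norm_num) (by norm_num)] at h7
  push_cast at h3 h7
  linarith
end

section
/- Let Γ be a reduced, non-ascending labeled graph with all labels positive, and let e, f be mobile edges of Γ with f ∉ {e, ē}. Then it is impossible that e can slide over f in Γ (yielding a reduced labeled graph Γ′) and that, in Γ′, f can then slide over e. -/
namespace LGraph

theorem ext' {V E : Type} {G H : LGraph V E} (h1 : ∀ x, G.o x = H.o x)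
    (h2 : ∀ x, G.bar x = H.bar x) (h3 : ∀ x, G.lab x = H.lab x) : G = H := by
  obtain ⟨o, b, _, _, l⟩ := G
  obtain ⟨o', b', _, _, l'⟩ := H
  have e1 : o = o' := funext h1
  have e2 : b = b' := funext h2
  have e3 : l = l' := funext h3
  subst e1 e2 e3
  rfl

theorem Isom.rfl' {V E : Type} (G : LGraph V E) : Isom G G :=
  ⟨id, id, Function.bijective_id, Function.bijective_id, fun _ => rfl, fun _ => rfl, fun _ => rfl⟩

theorem na_of_move {X Y : BGraph} (hX : X.G.NonAscending) (h : X.ElemMove Y)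
    (hr : Y.G.Reduced) : Y.G.NonAscending :=
  fun Z hZ => hX Z (Relation.ReflTransGen.head ⟨h, hr⟩ hZ)

theorem na_no_loop {V E : Type} {G : LGraph V E} (h : G.NonAscending) :
    ¬ G.HasStrictAscendingLoop := h ⟨V, E, G⟩ Relation.ReflTransGen.refl

open Classical in
/-- The graph obtained by an inverse A-move at the loop `g`. -/
noncomputable def expand {V E : Type} (G : LGraph V E) (g : E) (b k : ℤ) :
    LGraph (Option V) (E ⊕ Bool) where
  o := Sum.elim (fun x => if x = g ∨ x = G.bar g then none else some (G.o x))
    (fun i => if i = true then none else some (G.o g))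
  bar := Sum.elim (fun x => Sum.inl (G.bar x)) (fun i => Sum.inr (!i))
  bar_bar := by
    rintro (x | i)
    · simp [G.bar_bar]
    · simp
  bar_ne := by
    rintro (x | i)
    · simp [G.bar_ne]
    · simp
  lab := Sum.elim (fun x => if x = g then k else if x = G.bar g then 1 else G.lab x)
    (fun i => if i = true then k else b)

theorem bar_eq_iff {V E : Type} (G : LGraph V E) (x y : E) : G.bar x = y ↔ x = G.bar y := by
  constructor
  · rintro rfl
    exact (G.bar_bar x).symm
  · rintro rfl
    exact G.bar_bar y

theorem expand_reduced {V E : Type} (G : LGraph V E) (hr : G.Reduced) (g : E) (b k : ℤ)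
    (hb : b ≠ 1) (hk : k ≠ 1) : (G.expand g b k).Reduced := by
  rintro (x | i) h
  · have h1 := G.bar_eq_iff x g
    have h2 : G.bar x = G.bar g ↔ x = g := by rw [G.bar_eq_iff, G.bar_bar]
    have h3 := hr x
    simp only [expand, t, Sum.elim_inl] at h h3 ⊢
    rw [h1, h2]
    by_cases c1 : x = g
    · simp [c1]
    · by_cases c2 : x = G.bar g
      · simp [c2]
      · simp only [c1, c2, if_false] at h
        simp [c1, c2, h3 h]
  · cases i <;> simp [expand] at h <;> contradiction

theorem expand_amove {V E : Type} (G : LGraph V E) (g : E) (b k : ℤ)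
    (hloop : G.o g = G.t g) (hlb : G.lab (G.bar g) = b) (hlg : G.lab g = b * k)
    (hb : b ≠ 1) (hk : k ≠ 1) : IsAMove (G.expand g b k) G := by
  have hne := G.bar_ne g
  refine ⟨Sum.inl (G.bar g), Sum.inr true, G.bar g, fun v => v.getD (G.o g),
    Sum.elim id (fun _ => g), ?_, ?_, ?_, ?_, ?_, ?_, ?_, ?_, ?_, ?_, ?_, ?_, ?_, ?_, ?_, ?_, ?_, ?_⟩
  · simp [expand, t, G.bar_bar]
  · simp [expand, hne]
  · simp [expand, G.bar_bar, hk]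
  · simp [expand]
  · simp [expand, t]
  · simp [expand, hk]
  · simp [expand, hb]
  · simp [expand, G.bar_bar]
  · rintro (x | i)
    · simp [expand, G.bar_bar, or_comm]
      tauto
    · cases i <;> simp [expand]
  · simp [expand, t, hloop]
  · simp [expand, t, G.bar_bar]
  · simp [expand, hlb]
  · simp [expand, G.bar_bar, hlg]
  · rintro (_ | w1) (_ | w2) <;> simp [expand]
  · intro v'
    exact ⟨some v', by simp [expand], rfl⟩
  · rintro (x | i) h1 h2 h3 h4
    · simp only [expand, Sum.elim_inl, G.bar_bar, ne_eq, Sum.inl.injEq] at h1 h2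
      simp [expand, G.bar_bar, h1, h2]
    · cases i <;> simp [expand] at h3 h4
  · rintro (x | i) (y | j) <;> (try cases i) <;> (try cases j) <;> simp [expand]
  · intro y h1 h2
    rw [G.bar_bar] at h2
    exact ⟨Sum.inl y, by simp [h1], by simp [expand, G.bar_bar, h2], by simp, by simp [expand], rfl⟩

/-- In a non-ascending graph a loop with one label dividing the other has equal labels. -/
theorem loop_lemma {V E : Type} (G : LGraph V E) (hr : G.Reduced) (hna : G.NonAscending)
    (g : E) (k : ℤ) (hloop : G.o g = G.t g) (hlg : G.lab g = G.lab (G.bar g) * k) : 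
    k = 1 := by
  by_contra hk
  by_cases hb : G.lab (G.bar g) = 1
  · refine na_no_loop hna ⟨G.bar g, ?_, hb, ?_⟩
    · simp only [t, G.bar_bar]; exact hloop.symm
    · rw [G.bar_bar, hlg, hb]; simpa using hk
  · have hm : BGraph.ElemMove ⟨V, E, G⟩ ⟨_, _, G.expand g (G.lab (G.bar g)) k⟩ :=
      Or.inr (Or.inr (Or.inr (Or.inr (G.expand_amove g _ k hloop rfl hlg hb hk))))
    have := na_of_move hna hm (expand_reduced G hr g _ k hb hk)
    refine na_no_loop this ⟨Sum.inl (G.bar g), ?_, ?_, ?_⟩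
    · simp [expand, t, G.bar_bar]
    · simp [expand, G.bar_ne]
    · simp [expand, G.bar_bar, hk]

open Classical in
/-- Change origin and label of `g`. -/
noncomputable def upd {V E : Type} (G : LGraph V E) (g : E) (w : V) (c : ℤ) : LGraph V E where
  o := fun x => if x = g then w else G.o x
  bar := G.bar
  bar_bar := G.bar_bar
  bar_ne := G.bar_ne
  lab := fun x => if x = g then c else G.lab x

theorem upd_self {V E : Type} (G : LGraph V E) (g : E) : G.upd g (G.o g) (G.lab g) = G := by
  apply ext'
  · intro x; simp only [upd]; split_ifs with h <;> simp [h]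
  · intro x; rfl
  · intro x; simp only [upd]; split_ifs with h <;> simp [h]

inductive Walk {V E : Type} (G : LGraph V E) (g : E) : V → ℤ → V → ℤ → Prop
  | nil (w : V) (c : ℤ) : Walk G g w c w c
  | cons (a : E) (w : V) (c m : ℤ) (v : V) (c' : ℤ) (h1 : a ≠ g) (h2 : a ≠ G.bar g)
      (hw : G.o a = w) (hc : c = G.lab a * m) (h : Walk G g (G.t a) (m * G.lab (G.bar a)) v c') :
      Walk G g w c v c'

theorem walk_one {V E : Type} (G : LGraph V E) (hpos : G.Positive) (hr : G.Reduced)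
    (hna : G.NonAscending) (g : E) {w : V} {c : ℤ} {v : V} {c' : ℤ} (h : Walk G g w c v c') :
    c = 1 → w = v ∧ c' = 1 := by
  induction h with
  | nil w c => intro h; exact ⟨rfl, h⟩
  | cons a w c m v c' h1 h2 hw hc h ih =>
    intro h0
    have ha : G.lab a = 1 :=
      Int.eq_one_of_dvd_one (hpos a).le ⟨m, by rw [← hc, h0]⟩
    have hl := hr a ha
    have hb : G.lab (G.bar a) = 1 := by
      by_contra hb
      exact na_no_loop hna ⟨a, hl, ha, hb⟩
    have hm : m = 1 := by rw [ha, h0] at hc; linarith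
    obtain ⟨i1, i2⟩ := ih (by rw [hm, hb]; rfl)
    exact ⟨by rw [← hw, hl, i1], i2⟩

theorem upd_reduced {V E : Type} (G : LGraph V E) (hr : G.Reduced) (g : E) (w : V) (c : ℤ)
    (hb : G.lab (G.bar g) ≠ 1) (hc : c = 1 → w = G.t g) : (G.upd g w c).Reduced := by
  intro x hx
  have hne := G.bar_ne g
  by_cases h1 : x = g
  · subst h1
    simp only [upd, if_true] at hx
    simp [upd, t, hne]
    exact hc hx
  · by_cases h2 : x = G.bar g
    · subst h2
      simp [upd, hne] at hx
      contradiction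
    · have h3 : G.bar x ≠ g := fun h => h2 ((G.bar_eq_iff _ _).1 h)
      simp only [upd, h1, if_false] at hx
      have := hr x hx
      simp [upd, t, h1, h3]
      exact this

theorem walk_na {V E : Type} (G : LGraph V E) (hpos : G.Positive) (hr : G.Reduced)
    (hna : G.NonAscending) (g : E) (hb : G.lab (G.bar g) ≠ 1)
    {w : V} {c : ℤ} {v : V} {c' : ℤ} (h : Walk G g w c v c') :
    v = G.t g → (G.upd g w c).NonAscending → (G.upd g v c').NonAscending := by
  induction h with
  | nil w c => intro _ h; exact h
  | cons a w c m v c' h1 h2 hw hc h ih =>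
    intro hv hn
    refine ih hv ?_
    have h3 : G.bar a ≠ g := fun h => h2 ((G.bar_eq_iff _ _).1 h)
    have heq : G.upd g (G.t a) (m * G.lab (G.bar a)) = (G.upd g w c).slide g a := by
      apply ext'
      · intro x
        by_cases hx : x = g <;> simp [upd, slide, t, hx, h3]
      · intro x; rfl
      · intro x
        by_cases hx : x = g
        · simp only [upd, slide, hx, h1, h3, if_true, if_false]
          rw [hc, mul_assoc, Int.mul_ediv_cancel_left _ (hpos a).ne']
        · simp [upd, slide, hx]
    refine na_of_move (X := ⟨V, E, G.upd g w c⟩) (Y := ⟨V, E, _⟩) hn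
      (Or.inl ⟨g, a, ⟨h1, h2, ?_, ?_⟩, ?_⟩)
      (upd_reduced G hr g _ _ hb ?_)
    · simp [upd, h1, hw]
    · simp [upd, h1, hc]
    · rw [← heq]; exact Isom.rfl' _
    · intro h0
      rw [(walk_one G hpos hr hna g h h0).1, hv]

theorem walk_final {V E : Type} (G : LGraph V E) (hpos : G.Positive) (hr : G.Reduced)
    (hna : G.NonAscending) (g : E) (hloop : G.o g = G.t g) (hl : G.lab g = G.lab (G.bar g))
    (k : ℤ) (h : Walk G g (G.o g) (G.lab g) (G.o g) (G.lab g * k)) : k = 1 := by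
  by_cases hb : G.lab (G.bar g) = 1
  · have := (walk_one G hpos hr hna g h (hl.trans hb)).2
    rw [hl, hb] at this; linarith
  · have hn := walk_na G hpos hr hna g hb h hloop (by rw [upd_self]; exact hna)
    have hne := G.bar_ne g
    refine loop_lemma _ (upd_reduced G hr g _ _ hb (fun _ => hloop)) hn g k ?_ ?_
    · simp [upd, t, hne]; exact hloop
    · simp [upd, hne, hl]

theorem walk_of_path {V E : Type} (G : LGraph V E) (hpos : G.Positive) (g : E) (l : List E) :
    ∀ (w : V) (c c' : ℤ), G.IsEdgePath l → (∀ a ∈ l, a ≠ g ∧ a ≠ G.bar g) →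
      (∀ a ∈ l.head?, G.o a = w) →
      (∀ i : Fin l.length, ∃ k : ℤ,
        (c : ℚ) * G.q (l.take i.1) = (k : ℚ) * (G.lab (l.get i) : ℚ)) →
      (c' : ℚ) = c * G.q l → Walk G g w c (l.foldl (fun _ a => G.t a) w) c' := by
  induction l with
  | nil =>
    intro w c c' _ _ _ _ hc
    have : c' = c := by simpa [q] using hc
    subst this
    exact Walk.nil _ _
  | cons a l ih =>
    intro w c c' hp hav hh hi hc
    obtain ⟨m, hm⟩ := hi ⟨0, by simp⟩
    have hcm : c = G.lab a * m := by
      simp [q] at hm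
      rw [mul_comm]; exact_mod_cast hm
    have ha : (G.lab a : ℚ) ≠ 0 := by exact_mod_cast (hpos a).ne'
    have key : ∀ r : List E, ((m * G.lab (G.bar a) : ℤ) : ℚ) * G.q r = c * G.q (a :: r) := by
      intro r
      simp only [q, qe, List.map_cons, List.prod_cons, hcm]
      push_cast
      field_simp
    have hp' := List.isChain_cons.1 hp
    refine Walk.cons a w c m _ c' (hav a (by simp)).1 (hav a (by simp)).2 (hh a (by simp)) hcm ?_
    refine ih _ _ _ hp'.2 (fun x hx => hav x (by simp [hx])) (fun x hx => (hp'.1 x hx).symm) ?_ ?_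
    · intro i
      obtain ⟨k, hk⟩ := hi ⟨i.1 + 1, by simp⟩
      refine ⟨k, ?_⟩
      rw [key]
      simpa using hk
    · rw [key]; exact hc

theorem foldl_last {V E : Type} (f : E → V) (l : List E) (x : E) (w : V) (h : l ≠ []) :
    l.foldl (fun _ a => f a) w = f (l.getLastD x) := by
  induction l generalizing w x with
  | nil => exact absurd rfl h
  | cons a l ih =>
    by_cases hl : l = []
    · subst hl; rfl
    · simp only [List.foldl_cons, List.getLastD_cons]
      exact ih _ _ hl

theorem no_cycle {V E : Type} (G : LGraph V E) (hpos : G.Positive) (hr : G.Reduced)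
    (hna : G.NonAscending) (g : E) (hloop : G.o g = G.t g) (hl : G.lab g = G.lab (G.bar g))
    (l : List E) (x : E) (hE : G.IsEEdgePath g l) (hlast : l ≠ [] → G.t (l.getLastD x) = G.o g)
    (k : ℤ) (hk : G.q l = k) : G.q l = 1 := by
  have hw := walk_of_path G hpos g l (G.o g) (G.lab g) (G.lab g * k) hE.1 hE.2.1 hE.2.2.1
    hE.2.2.2 (by rw [hk]; push_cast; rfl)
  have he : l.foldl (fun _ a => G.t a) (G.o g) = G.o g := by
    by_cases h : l = []
    · subst h; rfl
    · rw [foldl_last G.t l x _ h, hlast h]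
  rw [he] at hw
  rw [hk, walk_final G hpos hr hna g hloop hl k hw]; simp

theorem not_mobile {V E : Type} (G : LGraph V E) (hpos : G.Positive) (hr : G.Reduced)
    (hna : G.NonAscending) (f : E) (hloop : G.o f = G.t f) (hl : G.lab f = G.lab (G.bar f)) :
    ¬ G.Mobile f := by
  have mono : ∀ g, G.o g = G.t g → G.lab g = G.lab (G.bar g) → 
      ∀ l, ¬ G.IsStrictMonotoneCycle l g := by
    rintro g hg hlg l ⟨⟨h1, h2, k, h3⟩, h4⟩
    have hq : G.q (l ++ [g]) = G.q l := by
      have : (G.lab (G.bar g) : ℚ) ≠ 0 := by exact_mod_cast (hpos _).ne'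
      simp [q, qe, hlg, this]
    rw [hq] at h3 h4
    refine h4 (no_cycle G hpos hr hna (G.bar g) ?_ ?_ l g h1 ?_ k h3)
    · simp only [t, G.bar_bar]; exact hg.symm
    · rw [G.bar_bar]; exact hlg.symm
    · intro _; rw [h2]; exact hg
  have integ : ∀ g, G.o g = G.t g → G.lab g = G.lab (G.bar g) → 
      ∀ l, ¬ G.IsStrictIntegerCycle g l := by
    rintro g hg hlg l ⟨h1, h2, h3, ⟨k, h4⟩, h5⟩
    refine h5 (no_cycle G hpos hr hna g hg hlg l g h1 ?_ k h4)
    intro _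
    rw [h3]
    cases l with
    | nil => rfl
    | cons a l => exact h1.2.2.1 a (by simp)
  have hloop' : G.o (G.bar f) = G.t (G.bar f) := by
    simp only [t, G.bar_bar]; exact hloop.symm
  have hl' : G.lab (G.bar f) = G.lab (G.bar (G.bar f)) := by rw [G.bar_bar]; exact hl.symm
  rintro (⟨l, h | h⟩ | ⟨l, h | h⟩)
  · exact mono _ hloop hl l h
  · exact mono _ hloop' hl' l h
  · exact integ _ hloop hl l h
  · exact integ _ hloop' hl' l h

end LGraph

/-- (Lemma 4.3(f)) In a reduced non-ascending positively-labeled graph,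
for mobile edges `e, f` with `f ∉ {e, ē}`, the slide of `e` over `f` (to a reduced graph)
followed by a slide of `f` over `e` is impossible. -/
theorem stmt8 {V E : Type} [Finite V] [Finite E] (G : LGraph V E)
    (hpos : G.Positive) (hred : G.Reduced) (hna : G.NonAscending)
    (e f : E) (hme : G.Mobile e) (hmf : G.Mobile f)
    (hfe : f ≠ e) (hfebar : f ≠ G.bar e) :
    ¬ (G.CanSlide e f ∧ (G.slide e f).Reduced ∧ (G.slide e f).CanSlide f e) := by
  rintro ⟨⟨_, _, _, m, hm⟩, _, ⟨_, _, ho, n, hn⟩⟩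
  simp only [LGraph.slide, if_true, hfe, if_false] at ho hn
  rw [hm, mul_assoc, Int.mul_ediv_cancel_left _ (hpos f).ne'] at hn
  have hlg : G.lab f = G.lab (G.bar f) * (m * n) := by rw [hn]; ring
  have h1 := G.loop_lemma hred hna f (m * n) ho.symm hlg
  rw [h1, mul_one] at hlg
  exact G.not_mobile hpos hred hna f ho.symm hlg hmf
end

section
/- Let Γ be a reduced, non-ascending labeled graph with all labels positive, and let e, f be mobile edges of Γ with f ∉ {e, ē}. Suppose e can slide over f in Γ, yielding a reduced labeled graph Γ′, and in Γ′ the edge f̄ can then slide over e, yielding Γ″. Then λ(e) = λ(f) in Γ, and Γ″ is isomorphic as a labeled graph to the labeled graph obtained from Γ by the single slide of f over e. -/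
/-- (Lemma 4.3(i)) In a reduced non-ascending positively-labeled graph,
for mobile edges `e, f` with `f ∉ {e, ē}`: if `e` slides over `f` (to a reduced graph `Γ'`)
and then, in `Γ'`, `f̄` slides over `e` yielding `Γ''`, then `λ(e) = λ(f)` and `Γ''` is
isomorphic to the graph obtained from `Γ` by the single slide of `f` over `e`. -/
theorem stmt11 {V E : Type} [Finite V] [Finite E] (G : LGraph V E)
    (hpos : G.Positive) (hred : G.Reduced) (hna : G.NonAscending)
    (e f : E) (hme : G.Mobile e) (hmf : G.Mobile f)
    (hfe : f ≠ e) (hfebar : f ≠ G.bar e)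
    (h1 : G.CanSlide e f) (hred' : (G.slide e f).Reduced)
    (h2 : (G.slide e f).CanSlide (G.bar f) e) :
    G.lab e = G.lab f ∧
      LGraph.Isom ((G.slide e f).slide (G.bar f) e) (G.slide f e) := by
  classical
  obtain ⟨-, -, ho, k, hk⟩ := h1
  obtain ⟨-, -, -, hd⟩ := h2
  have ha := hpos f
  have hb := hpos (G.bar f)
  have hae := hpos e
  have bb := G.bar_bar
  have bne := G.bar_ne
  have bne' : ∀ x, x ≠ G.bar x := fun x => (bne x).symm
  have hfe' : G.bar f ≠ e := fun h => hfebar (by rw [← h, bb])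
  have hbb : G.bar f ≠ G.bar e := fun h => hfe (by rw [← bb f, h, bb])
  have hlabe : (G.slide e f).lab e = k * G.lab (G.bar f) := by
    simp only [LGraph.slide, if_true]
    rw [hk, mul_assoc]
    exact Int.mul_ediv_cancel_left _ ha.ne'
  have hlabf : (G.slide e f).lab (G.bar f) = G.lab (G.bar f) := by
    simp only [LGraph.slide, if_neg hfe']
  rw [hlabe, hlabf] at hd
  have hkpos : 0 < k := by
    rw [hk] at hae
    exact pos_of_mul_pos_right hae ha.le
  have hk1 : k = 1 := by
    have := Int.le_of_dvd hb hd
    nlinarith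
  subst hk1
  have hl : G.lab e = G.lab f := by rw [hk, mul_one]
  rw [one_mul] at hlabe
  have hef : e ≠ f := hfe.symm
  have hef' : e ≠ G.bar f := hfe'.symm
  have hbef : G.bar e ≠ f := hfebar.symm
  have hbebf : G.bar e ≠ G.bar f := hbb.symm
  have d1 : G.lab (G.bar f) * G.lab (G.bar e) / G.lab (G.bar f) = G.lab (G.bar e) :=
    Int.mul_ediv_cancel_left _ hb.ne'
  have d2 : G.lab f * G.lab (G.bar e) / G.lab f = G.lab (G.bar e) :=
    Int.mul_ediv_cancel_left _ ha.ne'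
  have d3 : G.lab f * G.lab (G.bar f) / G.lab f = G.lab (G.bar f) :=
    Int.mul_ediv_cancel_left _ ha.ne'
  refine ⟨hl, id, fun x => if x = e then G.bar f else if x = G.bar e then f else
    if x = f then e else if x = G.bar f then G.bar e else x, Function.bijective_id, ?_, ?_, ?_, ?_⟩
  · apply Finite.injective_iff_bijective.mp
    intro x y hxy
    have := bne e
    have := bne f
    grind
  all_goals
    intro x
    have y1 : x ≠ G.bar e → G.bar x ≠ e := fun h h' => h (by rw [← h', bb])
    have y2 : x ≠ e → G.bar x ≠ G.bar e := fun h h' => h (by rw [← bb x, h', bb])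
    have y3 : x ≠ G.bar f → G.bar x ≠ f := fun h h' => h (by rw [← h', bb])
    have y4 : x ≠ f → G.bar x ≠ G.bar f := fun h h' => h (by rw [← bb x, h', bb])
    by_cases x1 : x = e
    · subst x1; simp [LGraph.slide, LGraph.t, *]
    by_cases x2 : x = G.bar e
    · subst x2; simp [LGraph.slide, LGraph.t, *]
    by_cases x3 : x = f
    · subst x3; simp [LGraph.slide, LGraph.t, *]
    by_cases x4 : x = G.bar f
    · subst x4; simp [LGraph.slide, LGraph.t, *]
    simp [LGraph.slide, LGraph.t, *]
end
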